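/- Let B be a supersoluble brace such that B/ζ_n(B) is finite for some n ∈ ℕ. Then the (n+1)-th term Γ_{n+1}(B) of the lower central series of B is finite. -/

import Mathlib

/-- A (skew left) brace: a set with an additive group structure (not necessarily abelian)
and a multiplicative group structure sharing the same identity, satisfying the skew
distributive law `a * (b + c) = a * b + -a + a * c`. -/
class SkewBrace (B : Type*) extends AddGroup B, Group B where
  one_eq_zero : (1 : B) = (0 : B)
  skew_distrib : ∀ a b c : B, a * (b + c) = a * b + -a + a * c

/-- A group is supersoluble if it has a finite chain of normal subgroups with all
factors cyclic. -/
def Group.IsSupersoluble (G : Type*) [Group G] : Prop :=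
  ∃ (n : ℕ) (H : ℕ → Subgroup G),
    H 0 = ⊥ ∧ H n = ⊤ ∧ (∀ i, (H i).Normal) ∧ (∀ i, i < n → H i ≤ H (i + 1)) ∧
    ∀ i, i < n → ∃ x ∈ H (i + 1), ∀ y ∈ H (i + 1), ∃ k : ℤ, (x ^ k)⁻¹ * y ∈ H i

namespace SkewBrace

variable {B : Type*} [SkewBrace B]

/-- `lam a b = -a + a * b`, i.e. `λ_a(b)`. -/
def lam (a b : B) : B := -a + a * b

/-- the star operation `a ∗ b = λ_a(b) - b`. -/
def starOp (a b : B) : B := lam a b + -b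

/-- the additive commutator `[a,b]_+`. -/
def addCommutator (a b : B) : B := -a + -b + a + b

/-- A subbrace of `B`: a subset that is a subgroup of both `(B,+)` and `(B,·)`. -/
structure Subbrace (B : Type*) [SkewBrace B] where
  carrier : Set B
  zero_mem : (0 : B) ∈ carrier
  add_mem : ∀ {a b : B}, a ∈ carrier → b ∈ carrier → a + b ∈ carrier
  neg_mem : ∀ {a : B}, a ∈ carrier → -a ∈ carrier
  mul_mem : ∀ {a b : B}, a ∈ carrier → b ∈ carrier → a * b ∈ carrier
  inv_mem : ∀ {a : B}, a ∈ carrier → a⁻¹ ∈ carrier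

/-- An ideal of `B`: a subbrace that is normal in `(B,+)` and in `(B,·)` and is
invariant under all the maps `λ_b`. -/
structure BraceIdeal (B : Type*) [SkewBrace B] extends Subbrace B where
  addConj_mem : ∀ (b : B) {a : B}, a ∈ carrier → b + a + -b ∈ carrier
  mulConj_mem : ∀ (b : B) {a : B}, a ∈ carrier → b * a * b⁻¹ ∈ carrier
  lam_mem : ∀ (b : B) {a : B}, a ∈ carrier → lam b a ∈ carrier

/-- The additive subgroup underlying a subbrace. -/
def Subbrace.addSubgroup (S : Subbrace B) : AddSubgroup B where
  carrier := S.carrier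
  zero_mem' := S.zero_mem
  add_mem' := S.add_mem
  neg_mem' := S.neg_mem

/-- The multiplicative subgroup underlying a subbrace. -/
def Subbrace.subgroup (S : Subbrace B) : Subgroup B where
  carrier := S.carrier
  one_mem' := by rw [one_eq_zero]; exact S.zero_mem
  mul_mem' := S.mul_mem
  inv_mem' := S.inv_mem

/-- Given ideals `J ≤ I` of `B`, `MemSocQuotRel I J x` says that the coset of `x`
lies in `Soc(I/J) = Ker(λ) ∩ Z(I/J, +)` (for `I = B` take `I = Set.univ`). -/
def MemSocQuotRel (I J : Set B) (x : B) : Prop :=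
  x ∈ I ∧ (∀ y ∈ I, -y + lam x y ∈ J) ∧ ∀ y ∈ I, -(y + x) + (x + y) ∈ J

/-- Given ideals `J ≤ I` of `B`, `MemZetaQuotRel I J x` says that the coset of `x`
lies in `ζ(I/J) = Soc(I/J) ∩ Z(I/J, ·)`. -/
def MemZetaQuotRel (I J : Set B) (x : B) : Prop :=
  MemSocQuotRel I J x ∧ ∀ y ∈ I, (y * x)⁻¹ * (x * y) ∈ J

/-- The coset of `x` lies in `Soc(B/J)`. -/
def MemSocQuot (J : Set B) (x : B) : Prop := MemSocQuotRel Set.univ J x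

/-- The coset of `x` lies in `ζ(B/J)`. -/
def MemZetaQuot (J : Set B) (x : B) : Prop := MemZetaQuotRel Set.univ J x

/-- For ideals `I ≤ J`, the additive group of the quotient `J/I` is infinite cyclic. -/
def QuotAddInfCyclic (I J : Set B) : Prop :=
  ∃ x ∈ J, (∀ y ∈ J, ∃ n : ℤ, -(n • x) + y ∈ I) ∧ ∀ n : ℤ, n • x ∈ I → n = 0

/-- For ideals `I ≤ J`, the quotient `J/I` has prime order `p`. -/
def QuotPrimeOrder (I J : Set B) (p : ℕ) : Prop :=
  p.Prime ∧ ∃ x ∈ J, x ∉ I ∧ p • x ∈ I ∧ ∀ y ∈ J, ∃ n : ℤ, -(n • x) + y ∈ I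

/-- A brace is supersoluble if it has a finite chain of ideals each factor of which
either is additively infinite cyclic and contained in the socle of the corresponding
quotient, or has prime order. -/
def IsSupersoluble (B : Type*) [SkewBrace B] : Prop :=
  ∃ (n : ℕ) (I : ℕ → BraceIdeal B),
    (I 0).carrier = {0} ∧ (I n).carrier = Set.univ ∧
    (∀ i, i < n → (I i).carrier ⊆ (I (i + 1)).carrier) ∧
    ∀ i, i < n →
      (QuotAddInfCyclic (I i).carrier (I (i + 1)).carrier ∧
        ∀ x ∈ (I (i + 1)).carrier, MemSocQuot (I i).carrier x) ∨
      ∃ p : ℕ, QuotPrimeOrder (I i).carrier (I (i + 1)).carrier p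

/-- The upper socle series of the brace (carrier of the ideal) `I`. -/
def socChainRel (I : Set B) : ℕ → Set B
  | 0 => {0}
  | n + 1 => {x | MemSocQuotRel I (socChainRel I n) x}

/-- The upper central series of the brace (carrier of the ideal) `I`. -/
def zetaChainRel (I : Set B) : ℕ → Set B
  | 0 => {0}
  | n + 1 => {x | MemZetaQuotRel I (zetaChainRel I n) x}

/-- The upper socle series `Soc_n(B)` of `B`. -/
def socChain (B : Type*) [SkewBrace B] : ℕ → Set B := socChainRel Set.univ

/-- The upper central series `ζ_n(B)` of `B`. -/
def zetaChain (B : Type*) [SkewBrace B] : ℕ → Set B := zetaChainRel Set.univ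

/-- A brace is centrally nilpotent if its upper central series reaches `B`. -/
def IsCentrallyNilpotent (B : Type*) [SkewBrace B] : Prop :=
  ∃ m : ℕ, zetaChain B m = Set.univ

end SkewBrace

namespace SkewBrace

/-- The lower central series of `B`, indexed so that `gammaChain B n = Γ_{n+1}(B)`:
`gammaChain B 0 = Γ_1(B) = B` and `Γ_{n+2}(B)` is the additive subgroup generated by
`Γ_{n+1}(B) ∗ B`, `B ∗ Γ_{n+1}(B)` and `[Γ_{n+1}(B), B]_+`. -/
def gammaChain (B : Type*) [SkewBrace B] : ℕ → Set B
  | 0 => Set.univ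
  | n + 1 => ↑(AddSubgroup.closure
      {z : B | (∃ x ∈ gammaChain B n, ∃ b : B, z = starOp x b) ∨
        (∃ b : B, ∃ x ∈ gammaChain B n, z = starOp b x) ∨
        ∃ x ∈ gammaChain B n, ∃ b : B, z = addCommutator x b})

end SkewBrace

/-!
In a supersoluble brace the orders of the finite additive subgroups are bounded, so there is a
maximal finite ideal `F`, and `B/F` has no finite ideal other than `0`. This last property passes
from a brace `A` to `A/ζ(A)`: if `ζ(A)` has finite index `m` in an ideal `J`, then by transfer
`x ↦ m • x` is a homomorphism from `J` to `ζ(A)`. It is constant on orbits of `λ` and of both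
conjugations, and its kernel is an ideal that meets the torsion-free group `ζ(A)` trivially, hence
is finite, hence is `0`. So each `x ∈ J` is fixed by all these actions, that is, `J = ζ(A)`.
By induction `(B/F)/ζ_n(B/F)` has no finite ideal other than `0`; being finite, it is `0`.
Therefore `Γ_{n+1}(B/F) = 0`, that is, `Γ_{n+1}(B) ⊆ F`.
-/

section GroupTheory

theorem mul_pow_index_of_le_center {G : Type*} [Group G] {H : Subgroup G}
    (hH : H ≤ Subgroup.center G) (x y : G) :
    (x * y) ^ H.index = x ^ H.index * y ^ H.index := by
  by_cases h0 : H.index = 0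
  · simp [h0]
  have : H.FiniteIndex := ⟨h0⟩
  have : (Subgroup.center G).FiniteIndex := Subgroup.finiteIndex_of_le hH
  have htransfer : (x * y) ^ (Subgroup.center G).index =
      x ^ (Subgroup.center G).index * y ^ (Subgroup.center G).index := by
    simpa only [MonoidHom.transferCenterPow_apply, Subgroup.coe_mul] using
      congrArg Subtype.val (map_mul (MonoidHom.transferCenterPow G) x y)
  obtain ⟨k, hk⟩ := Subgroup.index_dvd_of_le hH
  have hcomm : Commute (x ^ (Subgroup.center G).index) (y ^ (Subgroup.center G).index) :=
    Subgroup.mem_center_iff.1 ((Subgroup.center G).pow_index_mem y) _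
  rw [hk, pow_mul, htransfer, hcomm.mul_pow, ← pow_mul, ← pow_mul]

theorem nsmul_add_index_of_le_center {A : Type*} [AddGroup A] {H : AddSubgroup A}
    (hH : H ≤ AddSubgroup.center A) (x y : A) :
    H.index • (x + y) = H.index • x + H.index • y :=
  mul_pow_index_of_le_center (H := AddSubgroup.toSubgroup H)
    (fun c hc ↦ Subgroup.mem_center_iff.2 fun g ↦
      AddSubgroup.mem_center_iff.1 (@hH c.toAdd hc) g.toAdd)
    (Multiplicative.ofAdd x) (Multiplicative.ofAdd y)

theorem nsmul_add_conj {A : Type*} [AddGroup A] (n : ℕ) (b a : A) :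
    n • (b + a + -b) = b + n • a + -b :=
  (map_nsmul (AddAut.addConj b).toAddMonoidHom n a).symm

theorem index_ne_zero_of_finset_cover {A : Type*} [AddGroup A] {H : AddSubgroup A}
    (T : Finset A) (hT : ∀ b, ∃ t ∈ T, -t + b ∈ H) : H.index ≠ 0 := by
  have hsurj : Function.Surjective fun t : T ↦ (QuotientAddGroup.mk t.1 : A ⧸ H) := by
    rintro ⟨b⟩
    obtain ⟨t, ht, htb⟩ := hT b
    exact ⟨⟨t, ht⟩, QuotientAddGroup.eq.2 htb⟩
  have := Finite.of_surjective _ hsurj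
  exact AddSubgroup.index_ne_zero_of_finite

end GroupTheory

namespace SkewBrace

variable {B C : Type*} [SkewBrace B] [SkewBrace C]

section Lam

theorem mul_eq_add_lam (a b : B) : a * b = a + lam a b := by simp [lam]

theorem lam_add (a b c : B) : lam a (b + c) = lam a b + lam a c := by
  simp [lam, skew_distrib, add_assoc]

/-- The map `λ_a` as an endomorphism of `(B, +)`. -/
def lamHom (a : B) : B →+ B := AddMonoidHom.mk' (lam a) (lam_add a)

theorem lam_zero (a : B) : lam a 0 = 0 := map_zero (lamHom a)

theorem lam_neg (a b : B) : lam a (-b) = -lam a b := map_neg (lamHom a) b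

theorem lam_nsmul (a : B) (n : ℕ) (b : B) : lam a (n • b) = n • lam a b :=
  map_nsmul (lamHom a) n b

theorem one_lam (b : B) : lam 1 b = b := by simp [lam, one_eq_zero]

theorem mul_lam (a b c : B) : lam (a * b) c = lam a (lam b c) := by
  change _ = lam a (-b + b * c)
  rw [lam_add, lam_neg]
  simp [lam, mul_assoc, add_assoc]

theorem inv_lam_lam (a b : B) : lam a⁻¹ (lam a b) = b := by
  rw [← mul_lam, inv_mul_cancel, one_lam]

theorem neg_add_eq_lam (a b : B) : -a + b = lam a (a⁻¹ * b) := by simp [lam]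

theorem inv_mul_eq_lam (a b : B) : a⁻¹ * b = lam a⁻¹ (-a + b) := by
  rw [neg_add_eq_lam, inv_lam_lam]

theorem inv_eq_neg_lam (a : B) : a⁻¹ = -lam a⁻¹ a := by
  rw [eq_neg_iff_add_eq_zero, ← mul_eq_add_lam, inv_mul_cancel, one_eq_zero]

end Lam

section BraceHom

/-- Homomorphisms of braces: maps that are homomorphisms for both group structures. -/
structure BraceHom (B C : Type*) [SkewBrace B] [SkewBrace C] extends B →+ C, B →ₙ* C

namespace BraceHom

instance : FunLike (BraceHom B C) B C where
  coe f := f.toFun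
  coe_injective f g h := by cases f; cases g; congr; exact DFunLike.coe_injective h

instance : AddMonoidHomClass (BraceHom B C) B C where
  map_add f := f.map_add'
  map_zero f := f.map_zero'

instance : MonoidHomClass (BraceHom B C) B C where
  map_mul f := f.map_mul'
  map_one f := by rw [one_eq_zero, one_eq_zero]; exact f.map_zero'

@[simp] theorem coe_toAddMonoidHom (f : BraceHom B C) : ⇑f.toAddMonoidHom = f := rfl

theorem map_lam (f : BraceHom B C) (a b : B) : f (lam a b) = lam (f a) (f b) := by
  simp only [lam, map_add, map_neg, map_mul]

theorem map_starOp (f : BraceHom B C) (a b : B) : f (starOp a b) = starOp (f a) (f b) := by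
  simp only [starOp, map_add, map_neg, map_lam]

theorem map_addCommutator (f : BraceHom B C) (a b : B) :
    f (addCommutator a b) = addCommutator (f a) (f b) := by
  simp only [addCommutator, map_add, map_neg]

end BraceHom

end BraceHom

namespace BraceIdeal

section Lattice

instance : SetLike (BraceIdeal B) B where
  coe I := I.carrier
  coe_injective I J h := by
    obtain ⟨⟨_⟩, _⟩ := I
    obtain ⟨⟨_⟩, _⟩ := J
    congr

@[simp] theorem mem_carrier {I : BraceIdeal B} {x : B} : x ∈ I.carrier ↔ x ∈ I := Iff.rfl

instance : PartialOrder (BraceIdeal B) := .ofSetLike (BraceIdeal B) B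

/-- The ideal on an additive subgroup that is normal for both operations and invariant under every
`λ_b`; closure under the multiplicative operations is automatic. -/
def ofAddSubgroup (S : AddSubgroup B) (addConj_mem : ∀ (b : B) {a : B}, a ∈ S → b + a + -b ∈ S)
    (mulConj_mem : ∀ (b : B) {a : B}, a ∈ S → b * a * b⁻¹ ∈ S)
    (lam_mem : ∀ (b : B) {a : B}, a ∈ S → lam b a ∈ S) : BraceIdeal B where
  carrier := S
  zero_mem := S.zero_mem
  add_mem := S.add_mem
  neg_mem := S.neg_mem
  mul_mem {a b} ha hb := by
    rw [mul_eq_add_lam]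
    exact S.add_mem ha (lam_mem a hb)
  inv_mem {a} ha := by
    rw [inv_eq_neg_lam]
    exact S.neg_mem (lam_mem _ ha)
  addConj_mem := addConj_mem
  mulConj_mem := mulConj_mem
  lam_mem := lam_mem

instance : OrderTop (BraceIdeal B) where
  top := ofAddSubgroup ⊤ (fun _ _ _ ↦ trivial) (fun _ _ _ ↦ trivial) (fun _ _ _ ↦ trivial)
  le_top _ _ _ := trivial

instance : OrderBot (BraceIdeal B) where
  bot := ofAddSubgroup ⊥ (by simp) (by simp [← one_eq_zero]) (by simp [lam_zero])
  bot_le I := by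
    rintro _ rfl
    exact I.zero_mem

/-- The preimage of an ideal under a brace homomorphism. -/
def comap (f : BraceHom B C) (I : BraceIdeal C) : BraceIdeal B :=
  ofAddSubgroup (I.addSubgroup.comap f.toAddMonoidHom)
    (fun b a ha ↦ by
      change f (b + a + -b) ∈ I
      rw [map_add, map_add, map_neg]
      exact I.addConj_mem (f b) ha)
    (fun b a ha ↦ by
      change f (b * a * b⁻¹) ∈ I
      rw [map_mul, map_mul, map_inv]
      exact I.mulConj_mem (f b) ha)
    (fun b a ha ↦ by
      change f (lam b a) ∈ I
      rw [f.map_lam]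
      exact I.lam_mem (f b) ha)

/-- The image of an ideal under a surjective brace homomorphism. -/
def map (f : BraceHom B C) (hf : Function.Surjective f) (I : BraceIdeal B) : BraceIdeal C :=
  ofAddSubgroup (I.addSubgroup.map f.toAddMonoidHom)
    (by
      rintro c _ ⟨a, ha, rfl⟩
      obtain ⟨b, rfl⟩ := hf c
      exact ⟨_, I.addConj_mem b ha, by simp⟩)
    (by
      rintro c _ ⟨a, ha, rfl⟩
      obtain ⟨b, rfl⟩ := hf c
      exact ⟨_, I.mulConj_mem b ha, by simp⟩)
    (by
      rintro c _ ⟨a, ha, rfl⟩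
      obtain ⟨b, rfl⟩ := hf c
      exact ⟨_, I.lam_mem b ha, f.map_lam b a⟩)

end Lattice

section Quotient

variable (I : BraceIdeal B)

theorem neg_add_mem_iff {a b : B} : -a + b ∈ I ↔ a⁻¹ * b ∈ I := by
  constructor <;> intro h
  · rw [inv_mul_eq_lam]
    exact I.lam_mem _ h
  · rw [neg_add_eq_lam]
    exact I.lam_mem _ h

/-- Congruence modulo `I` for the addition. -/
def addCon : AddCon B where
  r a b := -a + b ∈ I
  iseqv :=
    { refl := fun a ↦ by simpa using I.zero_mem
      symm := fun h ↦ by simpa using I.neg_mem h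
      trans := fun h h' ↦ by simpa [add_assoc] using I.add_mem h h' }
  add' {a b c d} h h' := by
    simpa [add_assoc] using I.add_mem (I.addConj_mem (-c) h) h'

/-- Congruence modulo `I` for the multiplication: it has the same classes as `I.addCon`. -/
def mulCon : Con B where
  toSetoid := I.addCon.toSetoid
  mul' {a b c d} h h' := by
    have hab : a⁻¹ * b ∈ I := I.neg_add_mem_iff.1 h
    have hcd : c⁻¹ * d ∈ I := I.neg_add_mem_iff.1 h'
    refine I.neg_add_mem_iff.2 ?_
    simpa [mul_assoc] using I.mul_mem (I.mulConj_mem c⁻¹ hab) hcd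

instance : HasQuotient B (BraceIdeal B) := ⟨fun I ↦ I.addCon.Quotient⟩

instance : SkewBrace (B ⧸ I) where
  __ := (inferInstance : AddGroup I.addCon.Quotient)
  __ := (inferInstance : Group I.mulCon.Quotient)
  one_eq_zero := congrArg I.addCon.toQuotient one_eq_zero
  skew_distrib := by
    rintro ⟨a⟩ ⟨b⟩ ⟨c⟩
    exact congrArg I.addCon.toQuotient (skew_distrib a b c)

/-- The canonical projection `B → B ⧸ I`. -/
def proj : BraceHom B (B ⧸ I) where
  toFun := I.addCon.toQuotient
  map_zero' := rfl
  map_add' _ _ := rfl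
  map_mul' _ _ := rfl

theorem proj_surjective : Function.Surjective I.proj := Quotient.mk_surjective

theorem proj_eq_proj {a b : B} : I.proj a = I.proj b ↔ -a + b ∈ I := I.addCon.eq

theorem proj_eq_zero {a : B} : I.proj a = 0 ↔ a ∈ I := by
  rw [eq_comm, ← map_zero I.proj, proj_eq_proj, neg_zero, zero_add]

theorem comap_proj_bot : (⊥ : BraceIdeal (B ⧸ I)).comap I.proj = I :=
  SetLike.ext fun _ ↦ I.proj_eq_zero

theorem ker_proj : I.proj.toAddMonoidHom.ker = I.addSubgroup :=
  AddSubgroup.ext fun _ ↦ I.proj_eq_zero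

end Quotient

theorem relIndex_subgroup (I J : BraceIdeal B) :
    I.subgroup.relIndex J.subgroup = I.addSubgroup.relIndex J.addSubgroup := by
  let e : J.subgroup ≃ J.addSubgroup := Equiv.subtypeEquivRight fun _ ↦ Iff.rfl
  refine Nat.card_congr (Quotient.congr e fun a b ↦ ?_)
  rw [QuotientGroup.leftRel_apply, QuotientAddGroup.leftRel_apply]
  exact I.neg_add_mem_iff.symm

end BraceIdeal

section Center

/-- Membership in the centre `ζ(B)`. -/
structure IsCentral (x : B) : Prop where
  lam_eq (y : B) : lam x y = y
  addCommute (y : B) : AddCommute x y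
  commute (y : B) : Commute x y

namespace IsCentral

variable {x y : B}

theorem mul_eq_add (hx : IsCentral x) (y : B) : x * y = x + y := by
  rw [mul_eq_add_lam, hx.lam_eq]

theorem lam_right (hx : IsCentral x) (y : B) : lam y x = x := by
  have h : y + lam y x = y + x := by
    rw [← mul_eq_add_lam, ← (hx.commute y).eq, hx.mul_eq_add, (hx.addCommute y).eq]
  exact add_left_cancel h

theorem inv_eq_neg (hx : IsCentral x) : x⁻¹ = -x := by
  rw [inv_eq_neg_lam, hx.lam_right]

theorem zero : IsCentral (0 : B) where
  lam_eq y := by rw [← one_eq_zero, one_lam]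
  addCommute := AddCommute.zero_left
  commute y := by
    rw [← one_eq_zero]
    exact Commute.one_left y

theorem add (hx : IsCentral x) (hy : IsCentral y) : IsCentral (x + y) where
  lam_eq z := by rw [← hx.mul_eq_add, mul_lam, hy.lam_eq, hx.lam_eq]
  addCommute z := (hx.addCommute z).add_left (hy.addCommute z)
  commute z := by
    rw [← hx.mul_eq_add]
    exact (hx.commute z).mul_left (hy.commute z)

theorem neg (hx : IsCentral x) : IsCentral (-x) where
  lam_eq z := by
    rw [← hx.inv_eq_neg]
    conv_lhs => rw [← hx.lam_eq z, inv_lam_lam]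
  addCommute z := (hx.addCommute z).neg_left
  commute z := by
    rw [← hx.inv_eq_neg]
    exact (hx.commute z).inv_left

theorem starOp_left (hx : IsCentral x) (y : B) : starOp x y = 0 := by
  rw [starOp, hx.lam_eq, add_neg_cancel]

theorem starOp_right (hx : IsCentral x) (y : B) : starOp y x = 0 := by
  rw [starOp, hx.lam_right, add_neg_cancel]

theorem addCommutator_eq_zero (hx : IsCentral x) (y : B) : addCommutator x y = 0 := by
  rw [addCommutator, add_assoc, (hx.addCommute y).eq, ← neg_add_rev, neg_add_cancel]

end IsCentral

theorem MemZetaQuot.mono {S T : Set B} (hST : S ⊆ T) {x : B} (hx : MemZetaQuot S x) :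
    MemZetaQuot T x :=
  ⟨⟨hx.1.1, fun y hy ↦ hST (hx.1.2.1 y hy), fun y hy ↦ hST (hx.1.2.2 y hy)⟩,
    fun y hy ↦ hST (hx.2 y hy)⟩

variable (B) in
/-- The centre `ζ(B)` as a subgroup of `(B, +)`. -/
def centerAddSubgroup : AddSubgroup B where
  carrier := {x | IsCentral x}
  zero_mem' := .zero
  add_mem' := .add
  neg_mem' := .neg

namespace BraceIdeal

/-- Every additive subgroup of the centre is an ideal. -/
def ofLECenter (S : AddSubgroup B) (hS : S ≤ centerAddSubgroup B) : BraceIdeal B :=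
  ofAddSubgroup S
    (fun b a ha ↦ by rwa [← ((hS ha).addCommute b).eq, add_neg_cancel_right])
    (fun b a ha ↦ by rwa [← ((hS ha).commute b).eq, mul_inv_cancel_right])
    (fun b a ha ↦ by rwa [(hS ha).lam_right])

end BraceIdeal

variable (B) in
/-- The centre `ζ(B)` as an ideal. -/
def center : BraceIdeal B := .ofLECenter (centerAddSubgroup B) le_rfl

theorem memZetaQuot_iff {I : BraceIdeal B} {x : B} :
    MemZetaQuot I.carrier x ↔ x ∈ (center (B ⧸ I)).comap I.proj := by
  constructor
  · rintro ⟨⟨-, hlam, hadd⟩, hmul⟩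
    exact
      { lam_eq := I.proj_surjective.forall.2 fun y ↦ (I.proj_eq_proj.2 (hlam y trivial)).symm
        addCommute := I.proj_surjective.forall.2 fun y ↦
          (I.proj_eq_proj.2 (hadd y trivial)).symm
        commute := I.proj_surjective.forall.2 fun y ↦
          (I.proj_eq_proj.2 (I.neg_add_mem_iff.2 (hmul y trivial))).symm }
  · intro h
    exact
      ⟨⟨trivial, fun y _ ↦ I.proj_eq_proj.1 (h.lam_eq (I.proj y)).symm,
        fun y _ ↦ I.proj_eq_proj.1 (h.addCommute (I.proj y)).eq.symm⟩,
        fun y _ ↦ I.neg_add_mem_iff.1 (I.proj_eq_proj.1 (h.commute (I.proj y)).eq.symm)⟩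

end Center

namespace BraceIdeal

instance (I : BraceIdeal B) : I.addSubgroup.Normal := ⟨fun _ ha b ↦ I.addConj_mem b ha⟩

section CenterIndex

/-- The index of `ζ(B) ∩ J` in `J`, with value `0` if it is infinite. Multiplication by this number
is a homomorphism from `J` to `ζ(B)` for both operations, the transfer of the group `(J, +)`. -/
noncomputable def centerIndex (J : BraceIdeal B) : ℕ :=
  (center B).addSubgroup.relIndex J.addSubgroup

variable {J : BraceIdeal B} {x y : B}

theorem isCentral_centerIndex_nsmul (hx : x ∈ J) : IsCentral (J.centerIndex • x) :=
  ((center B).addSubgroup.addSubgroupOf J.addSubgroup).nsmul_index_mem ⟨x, hx⟩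

theorem centerIndex_nsmul_add (hx : x ∈ J) (hy : y ∈ J) :
    J.centerIndex • (x + y) = J.centerIndex • x + J.centerIndex • y := by
  have hle : (center B).addSubgroup.addSubgroupOf J.addSubgroup ≤
      AddSubgroup.center J.addSubgroup := fun c hc ↦
    AddSubgroup.mem_center_iff.2 fun g ↦ Subtype.ext (IsCentral.addCommute hc g.1).eq.symm
  exact congrArg Subtype.val (nsmul_add_index_of_le_center hle ⟨x, hx⟩ ⟨y, hy⟩)

theorem centerIndex_nsmul_lam (hx : x ∈ J) (b : B) :
    J.centerIndex • lam b x = J.centerIndex • x := by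
  rw [← lam_nsmul, (isCentral_centerIndex_nsmul hx).lam_right]

theorem centerIndex_nsmul_addConj (hx : x ∈ J) (b : B) :
    J.centerIndex • (b + x + -b) = J.centerIndex • x := by
  rw [nsmul_add_conj, ← ((isCentral_centerIndex_nsmul hx).addCommute b).eq, add_neg_cancel_right]

theorem centerIndex_nsmul_mul (hx : x ∈ J) (hy : y ∈ J) :
    J.centerIndex • (x * y) = J.centerIndex • x + J.centerIndex • y := by
  rw [mul_eq_add_lam, centerIndex_nsmul_add hx (J.lam_mem x hy), centerIndex_nsmul_lam hy]

theorem centerIndex_nsmul_pow (hx : x ∈ J) (k : ℕ) :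
    J.centerIndex • x ^ k = k • J.centerIndex • x := by
  induction k with
  | zero => simp [one_eq_zero]
  | succ k ih => rw [pow_succ, centerIndex_nsmul_mul (J.subgroup.pow_mem hx k) hx, ih, succ_nsmul]

end CenterIndex

section Isolated

/-- An ideal is isolated if it has infinite index in every strictly larger ideal, that is, if its
quotient brace has no finite ideal other than `0`. -/
def IsIsolated (Z : BraceIdeal B) : Prop :=
  ∀ ⦃J : BraceIdeal B⦄, Z ≤ J → Z.addSubgroup.relIndex J.addSubgroup ≠ 0 → J ≤ Z

theorem isIsolated_comap_iff {f : BraceHom B C} (hf : Function.Surjective f) {K : BraceIdeal C} :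
    (K.comap f).IsIsolated ↔ K.IsIsolated := by
  constructor
  · intro h J hKJ hindex
    have hle : J.comap f ≤ K.comap f := by
      refine h (fun x hx ↦ hKJ hx) ?_
      change (K.addSubgroup.comap f.toAddMonoidHom).relIndex
        (J.addSubgroup.comap f.toAddMonoidHom) ≠ 0
      rwa [AddSubgroup.relIndex_comap, AddSubgroup.map_comap_eq_self_of_surjective hf]
    exact hf.forall.2 fun x hx ↦ hle hx
  · intro h J hKJ hindex
    have hle : J.map f hf ≤ K := by
      refine h (hf.forall.2 fun x hx ↦ ⟨x, hKJ hx, rfl⟩) ?_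
      change K.addSubgroup.relIndex (J.addSubgroup.map f.toAddMonoidHom) ≠ 0
      rwa [← AddSubgroup.relIndex_comap]
    exact fun x hx ↦ hle ⟨x, hx, rfl⟩

theorem isIsolated_of_maximal_finite {F : BraceIdeal B}
    (hF : Maximal (fun I : BraceIdeal B ↦ (I : Set B).Finite) F) : F.IsIsolated := by
  intro J hFJ hindex
  refine hF.2 ?_ hFJ
  have : Finite F.addSubgroup := hF.1
  have hcard : Nat.card J.addSubgroup ≠ 0 := by
    rw [← AddSubgroup.relIndex_bot_left,
      ← AddSubgroup.relIndex_mul_relIndex ⊥ F.addSubgroup J.addSubgroup bot_le hFJ,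
      AddSubgroup.relIndex_bot_left]
    exact mul_ne_zero Nat.card_pos.ne' hindex
  exact Nat.finite_of_card_ne_zero hcard

namespace IsIsolated

variable {J : BraceIdeal B} {x y : B}

theorem eq_zero_of_nsmul_eq_zero (h : (⊥ : BraceIdeal B).IsIsolated) (hx : IsCentral x)
    {k : ℕ} (hk : k ≠ 0) (hkx : k • x = 0) : x = 0 := by
  have hle : AddSubgroup.zmultiples x ≤ centerAddSubgroup B :=
    AddSubgroup.zmultiples_le_of_mem hx
  refine h (J := .ofLECenter _ hle) bot_le ?_ (AddSubgroup.mem_zmultiples x)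
  change (⊥ : AddSubgroup B).relIndex (AddSubgroup.zmultiples x) ≠ 0
  rw [AddSubgroup.relIndex_bot_left, Nat.card_zmultiples]
  exact (isOfFinAddOrder_iff_nsmul_eq_zero.2
    ⟨k, Nat.pos_of_ne_zero hk, hkx⟩).addOrderOf_pos.ne'

theorem eq_of_nsmul_eq_nsmul (h : (⊥ : BraceIdeal B).IsIsolated) (hx : IsCentral x)
    (hy : IsCentral y) {k : ℕ} (hk : k ≠ 0) (hxy : k • x = k • y) : x = y := by
  refine neg_add_eq_zero.1 (h.eq_zero_of_nsmul_eq_zero (hx.neg.add hy) hk ?_)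
  rw [(hx.neg.addCommute y).add_nsmul, neg_nsmul, hxy, neg_add_cancel]

/- Some power `x ^ k` is central, so `x` and its conjugate have the same `k`-th power, and `k` can
be cancelled in the torsion-free group `ζ(B)`. -/
theorem centerIndex_nsmul_mulConj (h : (⊥ : BraceIdeal B).IsIsolated) (hJ : J.centerIndex ≠ 0)
    (hx : x ∈ J) (b : B) : J.centerIndex • (b * x * b⁻¹) = J.centerIndex • x := by
  have hbx : b * x * b⁻¹ ∈ J := J.mulConj_mem b hx
  have hindex : (center B).subgroup.relIndex J.subgroup ≠ 0 := by rwa [relIndex_subgroup]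
  obtain ⟨k, hk, -, hxk⟩ := Subgroup.exists_pow_mem_of_relIndex_ne_zero hindex hx
  have hcentral : IsCentral (x ^ k) := hxk.1
  refine h.eq_of_nsmul_eq_nsmul (isCentral_centerIndex_nsmul hbx) (isCentral_centerIndex_nsmul hx)
    hk.ne' ?_
  rw [← centerIndex_nsmul_pow hbx, ← centerIndex_nsmul_pow hx, conj_pow,
    ← (hcentral.commute b).eq, mul_inv_cancel_right]

/- The kernel is an ideal meeting the torsion-free group `ζ(B)` trivially, so it embeds in the
finite group `J / (ζ(B) ∩ J)` and is therefore `0`. -/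
theorem eq_zero_of_centerIndex_nsmul_eq_zero (h : (⊥ : BraceIdeal B).IsIsolated)
    (hJ : J.centerIndex ≠ 0) (hx : x ∈ J) (hx0 : J.centerIndex • x = 0) : x = 0 := by
  let S : AddSubgroup B :=
    { carrier := {x | x ∈ J ∧ J.centerIndex • x = 0}
      zero_mem' := ⟨J.zero_mem, nsmul_zero _⟩
      add_mem' := fun ha hb ↦ ⟨J.add_mem ha.1 hb.1, by
        rw [centerIndex_nsmul_add ha.1 hb.1, ha.2, hb.2, add_zero]⟩
      neg_mem' := fun ha ↦ ⟨J.neg_mem ha.1, by rw [neg_nsmul, ha.2, neg_zero]⟩ }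
  let K : BraceIdeal B := .ofAddSubgroup S
    (fun b _ ha ↦ ⟨J.addConj_mem b ha.1, (centerIndex_nsmul_addConj ha.1 b).trans ha.2⟩)
    (fun b _ ha ↦ ⟨J.mulConj_mem b ha.1, (h.centerIndex_nsmul_mulConj hJ ha.1 b).trans ha.2⟩)
    (fun b _ ha ↦ ⟨J.lam_mem b ha.1, (centerIndex_nsmul_lam ha.1 b).trans ha.2⟩)
  have hinf : (center B).addSubgroup ⊓ S = ⊥ :=
    eq_bot_iff.2 fun _ ha ↦ h.eq_zero_of_nsmul_eq_zero ha.1 hJ ha.2.2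
  have hindex : (⊥ : AddSubgroup B).relIndex S ≠ 0 := by
    rw [← hinf, AddSubgroup.inf_relIndex_right]
    exact mt (AddSubgroup.relIndex_eq_zero_of_le_right fun _ ha ↦ ha.1) hJ
  exact h (J := K) bot_le hindex ⟨hx, hx0⟩

theorem centerIndex_nsmul_injOn (h : (⊥ : BraceIdeal B).IsIsolated) (hJ : J.centerIndex ≠ 0) :
    Set.InjOn (J.centerIndex • ·) (J : Set B) := by
  intro x hx y hy (hxy : J.centerIndex • x = J.centerIndex • y)
  refine neg_add_eq_zero.1
    (h.eq_zero_of_centerIndex_nsmul_eq_zero hJ (J.add_mem (J.neg_mem hx) hy) ?_)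
  rw [centerIndex_nsmul_add (J.neg_mem hx) hy, neg_nsmul, hxy, neg_add_cancel]

theorem center (h : (⊥ : BraceIdeal B).IsIsolated) : (center B).IsIsolated := by
  intro J _ hJ x hx
  have hinj := h.centerIndex_nsmul_injOn hJ
  have hlam (b : B) : lam b x = x := hinj (J.lam_mem b hx) hx (centerIndex_nsmul_lam hx b)
  have hadd (b : B) : b + x + -b = x :=
    hinj (J.addConj_mem b hx) hx (centerIndex_nsmul_addConj hx b)
  have hmul (b : B) : b * x * b⁻¹ = x :=
    hinj (J.mulConj_mem b hx) hx (h.centerIndex_nsmul_mulConj hJ hx b)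
  have haddComm (b : B) : x + b = b + x := (add_neg_eq_iff_eq_add.1 (hadd b)).symm
  have hmulComm (b : B) : x * b = b * x := (mul_inv_eq_iff_eq_mul.1 (hmul b)).symm
  refine ⟨fun b ↦ add_left_cancel (a := x) ?_, haddComm, hmulComm⟩
  rw [← mul_eq_add_lam, hmulComm, mul_eq_add_lam, hlam, haddComm]

theorem comap_center {Z : BraceIdeal B} (hZ : Z.IsIsolated) :
    ((SkewBrace.center (B ⧸ Z)).comap Z.proj).IsIsolated := by
  rw [← Z.comap_proj_bot, isIsolated_comap_iff Z.proj_surjective] at hZ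
  exact (isIsolated_comap_iff Z.proj_surjective).2 hZ.center

end IsIsolated

end Isolated

section UpperCentralSeries

/-- The preimages in `B` of the terms `ζ_n(B/F)` of the upper central series of `B/F`. -/
def upperCentralSeries (F : BraceIdeal B) : ℕ → BraceIdeal B
  | 0 => F
  | n + 1 => (center (B ⧸ F.upperCentralSeries n)).comap (F.upperCentralSeries n).proj

theorem IsIsolated.upperCentralSeries {F : BraceIdeal B} (hF : F.IsIsolated) :
    ∀ n, (F.upperCentralSeries n).IsIsolated
  | 0 => hF
  | n + 1 => (hF.upperCentralSeries n).comap_center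

theorem zetaChain_subset_upperCentralSeries (F : BraceIdeal B) :
    ∀ n, zetaChain B n ⊆ F.upperCentralSeries n
  | 0 => by
    rintro _ rfl
    exact F.zero_mem
  | n + 1 => fun _ hx ↦
    memZetaQuot_iff.1 (MemZetaQuot.mono (F.zetaChain_subset_upperCentralSeries n) hx)

theorem gammaChain_succ_subset {I : BraceIdeal B} {n : ℕ}
    (h : gammaChain B n ⊆ (center (B ⧸ I)).comap I.proj) : gammaChain B (n + 1) ⊆ I := by
  have hcentral {x : B} (hx : x ∈ gammaChain B n) : IsCentral (I.proj x) := h hx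
  change AddSubgroup.closure _ ≤ I.addSubgroup
  rw [AddSubgroup.closure_le]
  rintro _ (⟨x, hx, b, rfl⟩ | ⟨b, x, hx, rfl⟩ | ⟨x, hx, b, rfl⟩) <;> refine I.proj_eq_zero.1 ?_
  · rw [BraceHom.map_starOp, (hcentral hx).starOp_left]
  · rw [BraceHom.map_starOp, (hcentral hx).starOp_right]
  · rw [BraceHom.map_addCommutator, (hcentral hx).addCommutator_eq_zero]

theorem gammaChain_subset_upperCentralSeries {F : BraceIdeal B} {i k : ℕ}
    (h : F.upperCentralSeries (i + k) = ⊤) : gammaChain B i ⊆ F.upperCentralSeries k := by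
  induction i generalizing k with
  | zero =>
    rw [zero_add] at h
    rw [h]
    exact fun _ _ ↦ trivial
  | succ i ih => exact gammaChain_succ_subset (ih (k := k + 1) (Nat.succ_add_eq_add_succ i k ▸ h))

theorem IsIsolated.gammaChain_subset {F : BraceIdeal B} (hF : F.IsIsolated) {n : ℕ}
    (hfin : ∃ T : Finset B, ∀ b : B, ∃ t ∈ T, -t + b ∈ zetaChain B n) : gammaChain B n ⊆ F := by
  obtain ⟨T, hT⟩ := hfin
  have hindex : (F.upperCentralSeries n).addSubgroup.index ≠ 0 :=
    index_ne_zero_of_finset_cover T fun b ↦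
      let ⟨t, ht, htb⟩ := hT b
      ⟨t, ht, F.zetaChain_subset_upperCentralSeries n htb⟩
  have htop : F.upperCentralSeries n = ⊤ := by
    refine top_le_iff.1 (hF.upperCentralSeries n le_top ?_)
    change (F.upperCentralSeries n).addSubgroup.relIndex ⊤ ≠ 0
    rwa [AddSubgroup.relIndex_top_right]
  exact gammaChain_subset_upperCentralSeries (k := 0) htop

end UpperCentralSeries

end BraceIdeal

section Supersoluble

variable {I : BraceIdeal B}

theorem QuotAddInfCyclic.le_of_finite {S : Set B} (h : QuotAddInfCyclic (I : Set B) S)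
    {H : AddSubgroup B} [Finite H] (hH : (H : Set B) ⊆ S) : H ≤ I.addSubgroup := by
  obtain ⟨x, -, hgen, hfree⟩ := h
  intro y hy
  obtain ⟨n, hn⟩ := hgen y (hH hy)
  have hproj : I.proj y = n • I.proj x := by rw [← map_zsmul, I.proj_eq_proj.2 hn]
  have hfin : IsOfFinAddOrder y :=
    H.subtype.isOfFinAddOrder (isOfFinAddOrder_of_finite (⟨y, hy⟩ : H))
  obtain ⟨k, hk, hky⟩ := isOfFinAddOrder_iff_nsmul_eq_zero.1 hfin
  have hkn : ((k : ℤ) * n) • x ∈ I := by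
    rw [← I.proj_eq_zero, map_zsmul, mul_zsmul, ← hproj, natCast_zsmul, ← map_nsmul, hky, map_zero]
  have hn0 : n = 0 := by
    simpa [hk.ne'] using hfree _ hkn
  exact I.proj_eq_zero.1 (by rw [hproj, hn0, zero_zsmul])

theorem QuotPrimeOrder.relIndex_ne_zero {J : BraceIdeal B} {p : ℕ}
    (h : QuotPrimeOrder (I : Set B) J p) : I.addSubgroup.relIndex J.addSubgroup ≠ 0 := by
  obtain ⟨hp, x, -, -, hpx, hgen⟩ := h
  have hfin : IsOfFinAddOrder (I.proj x) :=
    isOfFinAddOrder_iff_nsmul_eq_zero.2 ⟨p, hp.pos, by rw [← map_nsmul, I.proj_eq_zero.2 hpx]⟩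
  have : Finite (AddSubgroup.zmultiples (I.proj x)) := finite_zmultiples.2 hfin
  have hle : J.addSubgroup.map I.proj.toAddMonoidHom ≤ AddSubgroup.zmultiples (I.proj x) := by
    rintro _ ⟨y, hy, rfl⟩
    obtain ⟨n, hn⟩ := hgen y hy
    exact ⟨n, (map_zsmul I.proj n x).symm.trans (I.proj_eq_proj.2 hn)⟩
  have : Finite (J.addSubgroup.map I.proj.toAddMonoidHom) := Finite.Set.subset _ hle
  rw [← I.ker_proj, AddSubgroup.relIndex_ker]
  exact Nat.card_pos.ne'

theorem exists_forall_finite_relIndex_le {J : BraceIdeal B}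
    (h : QuotAddInfCyclic (I : Set B) J ∨ ∃ p, QuotPrimeOrder (I : Set B) J p) :
    ∃ k, ∀ H : AddSubgroup B, Finite H → H ≤ J.addSubgroup → I.addSubgroup.relIndex H ≤ k := by
  rcases h with hcyc | ⟨p, hprime⟩
  · exact ⟨1, fun H _ hHJ ↦ (AddSubgroup.relIndex_eq_one.2 (hcyc.le_of_finite hHJ)).le⟩
  · exact ⟨_, fun H _ hHJ ↦ AddSubgroup.relIndex_le_of_le_right hHJ hprime.relIndex_ne_zero⟩

namespace IsSupersoluble

theorem exists_card_finite_addSubgroup_le (hB : IsSupersoluble B) :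
    ∃ N, ∀ H : AddSubgroup B, Finite H → Nat.card H ≤ N := by
  obtain ⟨n, I, hbot, htop, -, hfactor⟩ := hB
  have hbound (i : ℕ) (hi : i ≤ n) :
      ∃ N, ∀ H : AddSubgroup B, Finite H → H ≤ (I i).addSubgroup → Nat.card H ≤ N := by
    induction i with
    | zero =>
      refine ⟨1, fun H _ hH ↦ (AddSubgroup.card_eq_one.2 (eq_bot_iff.2 fun y hy ↦ ?_)).le⟩
      exact (hbot ▸ hH hy : y ∈ ({0} : Set B))
    | succ i ih =>
      obtain ⟨N, hN⟩ := ih (Nat.le_of_succ_le hi)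
      obtain ⟨k, hk⟩ := exists_forall_finite_relIndex_le ((hfactor i hi).imp_left And.left)
      refine ⟨N * k, fun H hH hHI ↦ ?_⟩
      have hinf : Finite ((I i).addSubgroup ⊓ H : AddSubgroup B) :=
        Finite.Set.subset (H : Set B) inf_le_right
      calc Nat.card H
          = Nat.card ((I i).addSubgroup ⊓ H : AddSubgroup B) * (I i).addSubgroup.relIndex H := by
            rw [← AddSubgroup.relIndex_bot_left, ← AddSubgroup.relIndex_bot_left,
              ← AddSubgroup.inf_relIndex_right (I i).addSubgroup H,
              AddSubgroup.relIndex_mul_relIndex _ _ _ bot_le inf_le_right]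
        _ ≤ N * k := Nat.mul_le_mul (hN _ hinf inf_le_left) (hk H hH hHI)
  obtain ⟨N, hN⟩ := hbound n le_rfl
  exact ⟨N, fun H hH ↦ hN H hH fun y _ ↦ htop.ge (Set.mem_univ y)⟩

theorem exists_maximal_finite (hB : IsSupersoluble B) :
    ∃ F : BraceIdeal B, Maximal (fun I : BraceIdeal B ↦ (I : Set B).Finite) F := by
  obtain ⟨N, hN⟩ := hB.exists_card_finite_addSubgroup_le
  let orders : Set ℕ := {k | ∃ I : BraceIdeal B, (I : Set B).Finite ∧ (I : Set B).ncard = k}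
  have hbdd : BddAbove orders := by
    refine ⟨N, ?_⟩
    rintro _ ⟨I, hI, rfl⟩
    exact hN I.addSubgroup hI
  obtain ⟨F, hF, hcard⟩ : sSup orders ∈ orders :=
    Nat.sSup_mem ⟨_, ⊥, Set.finite_singleton 0, rfl⟩ hbdd
  refine ⟨F, hF, fun J hJ hFJ ↦ (Set.eq_of_subset_of_ncard_le hFJ ?_ hJ).ge⟩
  rw [hcard]
  exact le_csSup hbdd ⟨J, hJ, rfl⟩

end IsSupersoluble

end Supersoluble

end SkewBrace

namespace SkewBrace

theorem gamma_finite_of_zeta_finite_index_general (B : Type*) [SkewBrace B]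
    (hB : ∃ F : BraceIdeal B, Maximal (fun I : BraceIdeal B ↦ (I : Set B).Finite) F) (n : ℕ)
    (hfin : ∃ T : Finset B, ∀ b : B, ∃ t ∈ T, -t + b ∈ zetaChain B n) :
    (gammaChain B n).Finite := by
  obtain ⟨F, hF⟩ := hB
  exact hF.1.subset ((BraceIdeal.isIsolated_of_maximal_finite hF).gammaChain_subset hfin)

/-- Let `B` be a supersoluble brace such that `B/ζ_n(B)` is finite (there are
finitely many cosets of `ζ_n(B)`). Then `Γ_{n+1}(B)` is finite. -/
theorem gamma_finite_of_zeta_finite_index (B : Type*) [SkewBrace B]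
    (hB : IsSupersoluble B) (n : ℕ)
    (hfin : ∃ T : Finset B, ∀ b : B, ∃ t ∈ T, -t + b ∈ zetaChain B n) :
    (gammaChain B n).Finite :=
  gamma_finite_of_zeta_finite_index_general B hB.exists_maximal_finite n hfin

end SkewBrace
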